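/- Let X be a finite type and let p, q be pmfs on X. Define the Bhattacharyya distance D_B(p,q) := −log Σ_x sqrt( p(x)·q(x) ). Then D(p‖q) ≥ 2·D_B(p,q) and D(q‖p) ≥ 2·D_B(p,q), with all quantities valued in [0,∞]. -/

import Mathlib

open scoped BigOperators ENNReal

/-- A probability mass function on a finite type. -/
def IsPMF {X : Type*} [Fintype X] (μ : X → ℝ) : Prop :=
  (∀ x, 0 ≤ μ x) ∧ ∑ x, μ x = 1

open Classical in
/-- Relative entropy (KL divergence) valued in `[0,∞]`. -/
noncomputable def KLdiv {X : Type*} [Fintype X] (μ ν : X → ℝ) : ℝ≥0∞ :=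
  if ∀ x, ν x = 0 → μ x = 0 then
    ENNReal.ofReal (∑ x, μ x * Real.log (μ x / ν x))
  else ⊤

theorem kl_ge_aux {X : Type*} [Fintype X]
    (p q : X → ℝ) (hp : IsPMF p) (hq : IsPMF q) :
    ENNReal.ofReal (2 * -Real.log (∑ x, Real.sqrt (p x * q x))) ≤ KLdiv p q := by
  unfold KLdiv
  split_ifs with hac
  swap
  · exact le_top
  apply ENNReal.ofReal_le_ofReal
  have hpos : 0 < ∑ x, Real.sqrt (p x * q x) := by
    have hex : ∃ x, p x ≠ 0 := by
      by_contra! h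
      have h1 := hp.2
      simp [h] at h1
    obtain ⟨x, hx⟩ := hex
    have hpx : 0 < p x := lt_of_le_of_ne (hp.1 x) (Ne.symm hx)
    have hqx : 0 < q x := lt_of_le_of_ne (hq.1 x) (fun h => hx (hac x h.symm))
    exact Finset.sum_pos' (fun i _ => Real.sqrt_nonneg _)
      ⟨x, Finset.mem_univ x, Real.sqrt_pos.2 (mul_pos hpx hqx)⟩
  set S := ∑ x, Real.sqrt (p x * q x) with hS
  have key : ∀ x, p x * (2 - 2 * Real.log S) - 2 / S * Real.sqrt (p x * q x)
      ≤ p x * Real.log (p x / q x) := by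
    intro x
    by_cases hx : p x = 0
    · simp [hx]
    have hpx : 0 < p x := lt_of_le_of_ne (hp.1 x) (Ne.symm hx)
    have hqx : 0 < q x := lt_of_le_of_ne (hq.1 x) (fun h => hx (hac x h.symm))
    have hs : 0 < Real.sqrt (p x * q x) := Real.sqrt_pos.2 (mul_pos hpx hqx)
    have h := Real.log_le_sub_one_of_pos (div_pos hs (mul_pos hpx hpos))
    rw [Real.log_div hs.ne' (mul_pos hpx hpos).ne', Real.log_mul hpx.ne' hpos.ne',
      Real.log_sqrt (mul_pos hpx hqx).le, Real.log_mul hpx.ne' hqx.ne'] at h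
    rw [Real.log_div hpx.ne' hqx.ne']
    have h2 := mul_le_mul_of_nonneg_left h hpx.le
    have h3 : p x * (Real.sqrt (p x * q x) / (p x * S) - 1)
        = 1 / S * Real.sqrt (p x * q x) - p x := by
      field_simp
    rw [h3] at h2
    have h4 : 2 / S * Real.sqrt (p x * q x) = 2 * (1 / S * Real.sqrt (p x * q x)) := by ring
    rw [h4]
    linarith
  have hsum := Finset.sum_le_sum (fun x (_ : x ∈ Finset.univ) => key x)
  rw [Finset.sum_sub_distrib, ← Finset.sum_mul, ← Finset.mul_sum, hp.2, ← hS,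
    div_mul_cancel₀ _ hpos.ne'] at hsum
  linarith

/-- Both directed KL divergences dominate twice the Bhattacharyya distance
`D_B(p,q) = −log Σ_x √(p(x) q(x))`. -/
theorem kl_ge_two_bhattacharyya
    {X : Type*} [Fintype X]
    (p q : X → ℝ) (hp : IsPMF p) (hq : IsPMF q)
    (DB : ℝ) (hDB : DB = -Real.log (∑ x, Real.sqrt (p x * q x))) :
    ENNReal.ofReal (2 * DB) ≤ KLdiv p q ∧ ENNReal.ofReal (2 * DB) ≤ KLdiv q p := by
  subst hDB
  refine ⟨kl_ge_aux p q hp hq, ?_⟩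
  have h := kl_ge_aux q p hq hp
  simp only [mul_comm (q _) (p _)] at h
  exact h
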